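/- arXiv:2402.06988 — 2 statements merged into one kernel-verified Lean document; each statement's English description precedes it below -/
import Mathlib

section
/- If a judgement Γ ⊢ T' ≤ U' appears in a derivation tree whose root is ∅ ⊢ T ≤ U built from the algorithmic subtyping rules, then T' ∈ Sub(T) ∪ Sub(U) and U' ∈ Sub(T) ∪ Sub(U), and for every assumption V ≤ W ∈ Γ we have V ∈ Sub(T) ∪ Sub(U) and W ∈ Sub(T) ∪ Sub(U). -/
/-- Binary session types: `end`, type variables, recursion, input/output
message types with a list of payload types, selection and branching
(labels are positional). -/
inductive SType : Type where
  | endT : SType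
  | var : ℕ → SType
  | mu : ℕ → SType → SType
  | inp : List SType → SType → SType
  | out : List SType → SType → SType
  | sel : List SType → SType
  | bra : List SType → SType

namespace SType

/-- The size |T| of a session type. -/
def size : SType → ℕ
  | .endT => 1
  | .var _ => 1
  | .mu _ t => t.size + 1
  | .inp ts u => 1 + (ts.attach.map (fun t => t.1.size)).sum + u.size
  | .out ts u => 1 + (ts.attach.map (fun t => t.1.size)).sum + u.size
  | .sel ts => 1 + (ts.attach.map (fun t => t.1.size)).sum
  | .bra ts => 1 + (ts.attach.map (fun t => t.1.size)).sum
decreasing_by all_goals first | (have h := List.sizeOf_lt_of_mem t.2; simp_wf; omega) | (simp_wf; try omega)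

/-- Free type variables. -/
def fv : SType → Set ℕ
  | .endT => ∅
  | .var x => {x}
  | .mu x t => t.fv \ {x}
  | .inp ts u => (ts.attach.map (fun t => t.1.fv)).foldr (· ∪ ·) ∅ ∪ u.fv
  | .out ts u => (ts.attach.map (fun t => t.1.fv)).foldr (· ∪ ·) ∅ ∪ u.fv
  | .sel ts => (ts.attach.map (fun t => t.1.fv)).foldr (· ∪ ·) ∅
  | .bra ts => (ts.attach.map (fun t => t.1.fv)).foldr (· ∪ ·) ∅
decreasing_by all_goals first | (have h := List.sizeOf_lt_of_mem t.2; simp_wf; omega) | (simp_wf; try omega)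

/-- Bound type variables (variables bound by a μ-binder). -/
def bv : SType → Set ℕ
  | .endT => ∅
  | .var _ => ∅
  | .mu x t => {x} ∪ t.bv
  | .inp ts u => (ts.attach.map (fun t => t.1.bv)).foldr (· ∪ ·) ∅ ∪ u.bv
  | .out ts u => (ts.attach.map (fun t => t.1.bv)).foldr (· ∪ ·) ∅ ∪ u.bv
  | .sel ts => (ts.attach.map (fun t => t.1.bv)).foldr (· ∪ ·) ∅
  | .bra ts => (ts.attach.map (fun t => t.1.bv)).foldr (· ∪ ·) ∅
decreasing_by all_goals first | (have h := List.sizeOf_lt_of_mem t.2; simp_wf; omega) | (simp_wf; try omega)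

/-- Substitution `T[Q/X]` (written `subst Q X T`).  It respects shadowing;
it is capture-avoiding whenever no μ-binder of `T` lying above a free
occurrence of `X` binds a free variable of `Q` (in the statements below this
is guaranteed by hypotheses or by the closedness of `Q`). -/
def subst (q : SType) (x : ℕ) : SType → SType
  | .endT => .endT
  | .var y => if y = x then q else .var y
  | .mu y t => if y = x then .mu y t else .mu y (subst q x t)
  | .inp ts u => .inp (ts.attach.map (fun t => subst q x t.1)) (subst q x u)
  | .out ts u => .out (ts.attach.map (fun t => subst q x t.1)) (subst q x u)
  | .sel ts => .sel (ts.attach.map (fun t => subst q x t.1))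
  | .bra ts => .bra (ts.attach.map (fun t => subst q x t.1))
decreasing_by all_goals first | (have h := List.sizeOf_lt_of_mem t.2; simp_wf; omega) | (simp_wf; try omega)

/-- The set of bottom-up subterms `SubBU(T)`. -/
def SubBU : SType → Set SType
  | .endT => {.endT}
  | .var x => {.var x}
  | .mu x t => insert (.mu x t) ((subst (.mu x t) x) '' t.SubBU)
  | .inp ts u =>
      insert (.inp ts u)
        ((ts.attach.map (fun t => t.1.SubBU)).foldr (· ∪ ·) ∅ ∪ u.SubBU)
  | .out ts u =>
      insert (.out ts u)
        ((ts.attach.map (fun t => t.1.SubBU)).foldr (· ∪ ·) ∅ ∪ u.SubBU)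
  | .sel ts =>
      insert (.sel ts) ((ts.attach.map (fun t => t.1.SubBU)).foldr (· ∪ ·) ∅)
  | .bra ts =>
      insert (.bra ts) ((ts.attach.map (fun t => t.1.SubBU)).foldr (· ∪ ·) ∅)
decreasing_by all_goals first | (have h := List.sizeOf_lt_of_mem t.2; simp_wf; omega) | (simp_wf; try omega)

end SType
namespace SType

/-- `Sub t s` means `s ∈ Sub(t)`: the top-down subterm relation, the smallest
set containing `t` and closed under unfolding of μ-binders and under taking
immediate components of message and choice constructors. -/
inductive Sub (t : SType) : SType → Prop
  | refl : Sub t t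
  | mu_unfold {x s} : Sub t (.mu x s) → Sub t (subst (.mu x s) x s)
  | inp_payload {ts u s} : Sub t (.inp ts u) → s ∈ ts → Sub t s
  | inp_cont {ts u} : Sub t (.inp ts u) → Sub t u
  | out_payload {ts u s} : Sub t (.out ts u) → s ∈ ts → Sub t s
  | out_cont {ts u} : Sub t (.out ts u) → Sub t u
  | sel_payload {ts s} : Sub t (.sel ts) → s ∈ ts → Sub t s
  | bra_payload {ts s} : Sub t (.bra ts) → s ∈ ts → Sub t s

/-- Nesting depth nd(T). -/
def nd : SType → ℕ
  | .endT => 1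
  | .var _ => 1
  | .mu _ t => t.nd + 1
  | .inp ts u => ((ts.attach.map (fun t => t.1.nd)).foldr max u.nd) + 1
  | .out ts u => ((ts.attach.map (fun t => t.1.nd)).foldr max u.nd) + 1
  | .sel ts => ((ts.attach.map (fun t => t.1.nd)).foldr max 0) + 1
  | .bra ts => ((ts.attach.map (fun t => t.1.nd)).foldr max 0) + 1
decreasing_by all_goals first | (have h := List.sizeOf_lt_of_mem t.2; simp_wf; omega) | (simp_wf; try omega)

/-- A judgement `Σ ⊢ T ≤ U` of the Gay–Hole algorithmic subtyping system:
the component `j.1` is the set Σ of assumed pairs (finite along any actual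
derivation) and `j.2 = (T, U)`. -/
abbrev Judgement := Set (SType × SType) × SType × SType

/-- `Step j j'` holds iff the judgement `j'` is a premise generated directly
above the conclusion `j` by one of the algorithmic subtyping rules
AS-RecL, AS-RecR, AS-In, AS-Out, AS-Bra, AS-Sel (the rules AS-Assump and
AS-End have no premises). -/
inductive Step : Judgement → Judgement → Prop
  | recL {C : Set (SType × SType)} {x t u} :
      Step (C, .mu x t, u) (insert (.mu x t, u) C, subst (.mu x t) x t, u)
  | recR {C : Set (SType × SType)} {t x u} :
      Step (C, t, .mu x u) (insert (t, .mu x u) C, t, subst (.mu x u) x u)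
  | inp_payload {C : Set (SType × SType)} {ts us v w} (i : ℕ)
      (hlen : ts.length = us.length) (h1 : i < ts.length) (h2 : i < us.length) :
      Step (C, .inp ts v, .inp us w) (C, ts[i], us[i])
  | inp_cont {C : Set (SType × SType)} {ts us v w}
      (hlen : ts.length = us.length) :
      Step (C, .inp ts v, .inp us w) (C, v, w)
  | out_payload {C : Set (SType × SType)} {ts us v w} (i : ℕ)
      (hlen : ts.length = us.length) (h1 : i < ts.length) (h2 : i < us.length) :
      Step (C, .out ts v, .out us w) (C, us[i], ts[i])
  | out_cont {C : Set (SType × SType)} {ts us v w}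
      (hlen : ts.length = us.length) :
      Step (C, .out ts v, .out us w) (C, v, w)
  | bra {C : Set (SType × SType)} {ss ts : List SType} (i : ℕ)
      (hlen : ss.length ≤ ts.length) (h1 : i < ss.length) (h2 : i < ts.length) :
      Step (C, .bra ss, .bra ts) (C, ss[i], ts[i])
  | sel {C : Set (SType × SType)} {ss ts : List SType} (i : ℕ)
      (hlen : ts.length ≤ ss.length) (h1 : i < ss.length) (h2 : i < ts.length) :
      Step (C, .sel ss, .sel ts) (C, ss[i], ts[i])

/-- `StepAlg j j'` : the premise `j'` is generated directly above the
conclusion `j` by the algorithm, i.e. by an algorithmic subtyping rule where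
AS-Assump has highest priority (no rule with premises is applied to a
judgement whose pair is already in Σ) and AS-RecL is preferred to AS-RecR. -/
inductive StepAlg : Judgement → Judgement → Prop
  | recL {C : Set (SType × SType)} {x t u} (h : (SType.mu x t, u) ∉ C) :
      StepAlg (C, .mu x t, u) (insert (.mu x t, u) C, subst (.mu x t) x t, u)
  | recR {C : Set (SType × SType)} {t x u} (h : (t, SType.mu x u) ∉ C)
      (hnotmu : ∀ y s, t ≠ .mu y s) :
      StepAlg (C, t, .mu x u) (insert (t, .mu x u) C, t, subst (.mu x u) x u)
  | inp_payload {C : Set (SType × SType)} {ts us v w} (i : ℕ)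
      (h : (SType.inp ts v, SType.inp us w) ∉ C)
      (hlen : ts.length = us.length) (h1 : i < ts.length) (h2 : i < us.length) :
      StepAlg (C, .inp ts v, .inp us w) (C, ts[i], us[i])
  | inp_cont {C : Set (SType × SType)} {ts us v w}
      (h : (SType.inp ts v, SType.inp us w) ∉ C)
      (hlen : ts.length = us.length) :
      StepAlg (C, .inp ts v, .inp us w) (C, v, w)
  | out_payload {C : Set (SType × SType)} {ts us v w} (i : ℕ)
      (h : (SType.out ts v, SType.out us w) ∉ C)
      (hlen : ts.length = us.length) (h1 : i < ts.length) (h2 : i < us.length) :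
      StepAlg (C, .out ts v, .out us w) (C, us[i], ts[i])
  | out_cont {C : Set (SType × SType)} {ts us v w}
      (h : (SType.out ts v, SType.out us w) ∉ C)
      (hlen : ts.length = us.length) :
      StepAlg (C, .out ts v, .out us w) (C, v, w)
  | bra {C : Set (SType × SType)} {ss ts : List SType} (i : ℕ)
      (h : (SType.bra ss, SType.bra ts) ∉ C)
      (hlen : ss.length ≤ ts.length) (h1 : i < ss.length) (h2 : i < ts.length) :
      StepAlg (C, .bra ss, .bra ts) (C, ss[i], ts[i])
  | sel {C : Set (SType × SType)} {ss ts : List SType} (i : ℕ)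
      (h : (SType.sel ss, SType.sel ts) ∉ C)
      (hlen : ts.length ≤ ss.length) (h1 : i < ss.length) (h2 : i < ts.length) :
      StepAlg (C, .sel ss, .sel ts) (C, ss[i], ts[i])

/-- `Reaches j j'` : the judgement `j'` appears in a derivation tree with
root `j`, i.e. it is generated along some chain of premises starting from `j`. -/
def Reaches : Judgement → Judgement → Prop := Relation.ReflTransGen Step

/-- `ReachesAlg j j'` : `j'` appears in the derivation tree constructed
bottom-up from the root `j` with AS-Assump given highest priority and
AS-RecL preferred to AS-RecR. -/
def ReachesAlg : Judgement → Judgement → Prop := Relation.ReflTransGen StepAlg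

end SType
namespace SType

/-- `Unfolds t u` : the unfolding of `t` is `u`, where
`unfold(μX.T) = unfold(T[μX.T/X])` and `unfold(T) = T` for non-μ terms
(for contractive types this computes the unique unfolding). -/
inductive Unfolds : SType → SType → Prop
  | mu {x t u} : Unfolds (subst (.mu x t) x t) u → Unfolds (.mu x t) u
  | done {t} : (∀ x s, t ≠ .mu x s) → Unfolds t t

/-- `R` is a type simulation (for coinductive type equality): related types
have unfoldings with the same top constructor, identical (positional) label
sets, and componentwise `R`-related payloads and continuations. -/
def IsEqSimulation (R : Set (SType × SType)) : Prop :=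
  ∀ ⦃t u : SType⦄, (t, u) ∈ R →
    (Unfolds t .endT → Unfolds u .endT) ∧
    (∀ ts t', Unfolds t (.inp ts t') →
      ∃ us u', Unfolds u (.inp us u') ∧ ts.length = us.length ∧
        (∀ i (h1 : i < ts.length) (h2 : i < us.length), (ts[i], us[i]) ∈ R) ∧
        (t', u') ∈ R) ∧
    (∀ ts t', Unfolds t (.out ts t') →
      ∃ us u', Unfolds u (.out us u') ∧ ts.length = us.length ∧
        (∀ i (h1 : i < ts.length) (h2 : i < us.length), (ts[i], us[i]) ∈ R) ∧
        (t', u') ∈ R) ∧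
    (∀ ts, Unfolds t (.sel ts) →
      ∃ us, Unfolds u (.sel us) ∧ ts.length = us.length ∧
        (∀ i (h1 : i < ts.length) (h2 : i < us.length), (ts[i], us[i]) ∈ R)) ∧
    (∀ ts, Unfolds t (.bra ts) →
      ∃ us, Unfolds u (.bra us) ∧ ts.length = us.length ∧
        (∀ i (h1 : i < ts.length) (h2 : i < us.length), (ts[i], us[i]) ∈ R))

/-- Coinductive type equality `T =_c U`: both `(T, U)` and `(U, T)` are
contained in some type simulation. -/
def EqC (t u : SType) : Prop :=
  (∃ R, IsEqSimulation R ∧ (t, u) ∈ R) ∧ (∃ R, IsEqSimulation R ∧ (u, t) ∈ R)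

/-- `R` is a coinductive subtyping simulation: unfoldings have matching top
constructors with the usual covariant/contravariant component conditions
(inputs covariant in payloads and continuation; outputs contravariant in
payloads, covariant in continuation; branching allows the right side more
labels; selection allows the left side more labels). -/
def IsSubSimulation (R : Set (SType × SType)) : Prop :=
  ∀ ⦃t u : SType⦄, (t, u) ∈ R →
    (Unfolds t .endT → Unfolds u .endT) ∧
    (∀ ts t', Unfolds t (.inp ts t') →
      ∃ us u', Unfolds u (.inp us u') ∧ ts.length = us.length ∧
        (∀ i (h1 : i < ts.length) (h2 : i < us.length), (ts[i], us[i]) ∈ R) ∧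
        (t', u') ∈ R) ∧
    (∀ ts t', Unfolds t (.out ts t') →
      ∃ us u', Unfolds u (.out us u') ∧ ts.length = us.length ∧
        (∀ i (h1 : i < ts.length) (h2 : i < us.length), (us[i], ts[i]) ∈ R) ∧
        (t', u') ∈ R) ∧
    (∀ ts, Unfolds t (.sel ts) →
      ∃ us, Unfolds u (.sel us) ∧ us.length ≤ ts.length ∧
        (∀ i (h1 : i < ts.length) (h2 : i < us.length), (ts[i], us[i]) ∈ R)) ∧
    (∀ ts, Unfolds t (.bra ts) →
      ∃ us, Unfolds u (.bra us) ∧ ts.length ≤ us.length ∧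
        (∀ i (h1 : i < ts.length) (h2 : i < us.length), (ts[i], us[i]) ∈ R))

/-- Coinductive subtyping `T ≤_c U`: the pair is contained in some
coinductive subtyping simulation. -/
def SubC (t u : SType) : Prop :=
  ∃ R, IsSubSimulation R ∧ (t, u) ∈ R

/-! ### The exponential example.

We fix concrete variable names: `X` is `0`, `Z` is `1`, and `Y_i` is `i + 2`.
-/

/-- `μZ.!⟨Z⟩.Z`. -/
def muZ : SType := .mu 1 (.out [.var 1] (.var 1))

/-- `V l = ?⟨μZ.!⟨Z⟩.Z⟩.….?⟨μZ.!⟨Z⟩.Z⟩.X` (`l` repetitions of the prefix). -/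
def V : ℕ → SType
  | 0 => .var 0
  | l + 1 => .inp [muZ] (V l)

/-- `chain k = ?⟨μY_{k-1}.V_{k-1}⟩.….?⟨μY_1.V_1⟩.?⟨μY_0.V_0⟩.X`. -/
def chain : ℕ → SType
  | 0 => .var 0
  | r + 1 => .inp [.mu (r + 2) (V r)] (chain r)

/-- `T_k = μX.?⟨μY_{k-1}.V_{k-1}⟩.….?⟨μY_1.V_1⟩.?⟨μY_0.V_0⟩.X`. -/
def Tk (k : ℕ) : SType := .mu 0 (chain k)

/-- `W_r^k = V_r[T_k/X]`. -/
def W (k r : ℕ) : SType := subst (Tk k) 0 (V r)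

/-- `S_r^k = ?⟨μY_{r-1}.W_{r-1}^k⟩.….?⟨μY_0.W_0^k⟩.T_k`. -/
def Sexp (k : ℕ) : ℕ → SType
  | 0 => Tk k
  | r + 1 => .inp [.mu (r + 2) (W k r)] (Sexp k r)

/-- `μX.!⟨X⟩.X`. -/
def muOut : SType := .mu 0 (.out [.var 0] (.var 0))

/-- The assumption set `𝒮_l` determined by a sequence `α₁, …, α_l`
(given as `α 1, …, α l` for a function `α : ℕ → ℕ`):
`𝒮_l = {T_k ≤ T_{k+1}, S_k^k ≤ T_{k+1}}
  ∪ {μY_{αᵢ}.W_{αᵢ}^k ≤ μY_{αᵢ+i}.W_{αᵢ+i}^{k+1} | 1 ≤ i ≤ l}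
  ∪ {W_{αᵢ}^k ≤ μY_{αᵢ+i}.W_{αᵢ+i}^{k+1} | 1 ≤ i ≤ l}
  ∪ {T_k ≤ W_i^{k+1} | 1 ≤ i ≤ l} ∪ {S_{k−i}^k ≤ T_{k+1} | 1 ≤ i ≤ l}`. -/
def calS (k l : ℕ) (α : ℕ → ℕ) : Set (SType × SType) :=
  {(Tk k, Tk (k + 1)), (Sexp k k, Tk (k + 1))}
  ∪ (fun i => (SType.mu (α i + 2) (W k (α i)),
      SType.mu (α i + i + 2) (W (k + 1) (α i + i)))) '' (Set.Icc 1 l)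
  ∪ (fun i => (W k (α i),
      SType.mu (α i + i + 2) (W (k + 1) (α i + i)))) '' (Set.Icc 1 l)
  ∪ (fun i => (Tk k, W (k + 1) i)) '' (Set.Icc 1 l)
  ∪ (fun i => (Sexp k (k - i), Tk (k + 1))) '' (Set.Icc 1 l)

end SType
namespace SType

/-- `renameFree y z t` replaces every free occurrence of the variable `y`
in `t` by `z` (respecting shadowing): the renaming used by alpha-conversion. -/
def renameFree (y z : ℕ) : SType → SType
  | .endT => .endT
  | .var w => if w = y then .var z else .var w
  | .mu x t => if x = y then .mu x t else .mu x (renameFree y z t)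
  | .inp ts u => .inp (ts.attach.map (fun t => renameFree y z t.1)) (renameFree y z u)
  | .out ts u => .out (ts.attach.map (fun t => renameFree y z t.1)) (renameFree y z u)
  | .sel ts => .sel (ts.attach.map (fun t => renameFree y z t.1))
  | .bra ts => .bra (ts.attach.map (fun t => renameFree y z t.1))
decreasing_by all_goals first | (have h := List.sizeOf_lt_of_mem t.2; simp_wf; omega) | (simp_wf; try omega)

/-- Alpha-equivalence: `T'` is an alpha-variant of `T` (bound variables of
μ-binders may be renamed). -/
inductive AlphaEq : SType → SType → Prop
  | endT : AlphaEq .endT .endT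
  | var (x : ℕ) : AlphaEq (.var x) (.var x)
  | mu {x y : ℕ} {t t' : SType} (z : ℕ)
      (hz : z ∉ fv (SType.mu x t) ∪ bv t ∪ fv (SType.mu y t') ∪ bv t') :
      AlphaEq (renameFree x z t) (renameFree y z t') →
      AlphaEq (.mu x t) (.mu y t')
  | inp {ts us : List SType} {u v : SType} (hlen : ts.length = us.length)
      (hpay : ∀ i (h1 : i < ts.length) (h2 : i < us.length), AlphaEq ts[i] us[i])
      (hcont : AlphaEq u v) : AlphaEq (.inp ts u) (.inp us v)
  | out {ts us : List SType} {u v : SType} (hlen : ts.length = us.length)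
      (hpay : ∀ i (h1 : i < ts.length) (h2 : i < us.length), AlphaEq ts[i] us[i])
      (hcont : AlphaEq u v) : AlphaEq (.out ts u) (.out us v)
  | sel {ts us : List SType} (hlen : ts.length = us.length)
      (hpay : ∀ i (h1 : i < ts.length) (h2 : i < us.length), AlphaEq ts[i] us[i]) :
      AlphaEq (.sel ts) (.sel us)
  | bra {ts us : List SType} (hlen : ts.length = us.length)
      (hpay : ∀ i (h1 : i < ts.length) (h2 : i < us.length), AlphaEq ts[i] us[i]) :
      AlphaEq (.bra ts) (.bra us)

end SType

/-! A premise of an algorithmic rule compares types obtained from those of its conclusion by passing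
to an immediate component, by unfolding, or by leaving them alone, and it assumes nothing new except
possibly the pair compared in the conclusion. So every type occurring in the premise is a subterm of
one occurring in the conclusion, and transitivity of the subterm relation propagates this along a
chain of premises. -/

namespace SType

theorem Sub.trans {s t u : SType} (hst : Sub s t) (htu : Sub t u) : Sub s u := by
  induction htu with
  | refl => exact hst
  | mu_unfold _ ih => exact ih.mu_unfold
  | inp_payload _ hmem ih => exact ih.inp_payload hmem
  | inp_cont _ ih => exact ih.inp_cont
  | out_payload _ hmem ih => exact ih.out_payload hmem
  | out_cont _ ih => exact ih.out_cont
  | sel_payload _ hmem ih => exact ih.sel_payload hmem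
  | bra_payload _ hmem ih => exact ih.bra_payload hmem

/-- The types occurring in a judgement `Γ ⊢ T ≤ U`, on either side of the compared pair `(T, U)` or
of an assumption in `Γ`. Only whole sides count, not their subterms. -/
def Judgement.types (j : Judgement) : Set SType :=
  {t | ∃ p ∈ insert j.2 j.1, t = p.1 ∨ t = p.2}

theorem Judgement.forall_mem_types {Γ : Set (SType × SType)} {T U : SType} {P : SType → Prop} :
    (∀ t ∈ Judgement.types (Γ, T, U), P t) ↔
      P T ∧ P U ∧ ∀ V W, (V, W) ∈ Γ → P V ∧ P W :=
  calc (∀ t ∈ Judgement.types (Γ, T, U), P t)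
      ↔ ∀ p ∈ insert (T, U) Γ, P p.1 ∧ P p.2 :=
        ⟨fun h p hp => ⟨h p.1 ⟨p, hp, .inl rfl⟩, h p.2 ⟨p, hp, .inr rfl⟩⟩, by
          rintro h _ ⟨p, hp, rfl | rfl⟩
          exacts [(h p hp).1, (h p hp).2]⟩
    _ ↔ P T ∧ P U ∧ ∀ V W, (V, W) ∈ Γ → P V ∧ P W := by
        simp only [Set.forall_mem_insert, Prod.forall, and_assoc]

namespace Step

variable {j j' : Judgement}

theorem assumptions_subset (h : Step j j') : j'.1 ⊆ insert j.2 j.1 := by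
  cases h with
  | recL | recR => exact subset_rfl
  | _ => exact Set.subset_insert _ _

theorem sub_left (h : Step j j') : Sub j.2.1 j'.2.1 ∨ Sub j.2.2 j'.2.1 := by
  cases h with
  | recL => exact .inl Sub.refl.mu_unfold
  | recR => exact .inl .refl
  | inp_payload => exact .inl (Sub.refl.inp_payload (List.getElem_mem _))
  | inp_cont => exact .inl Sub.refl.inp_cont
  | out_payload => exact .inr (Sub.refl.out_payload (List.getElem_mem _))
  | out_cont => exact .inl Sub.refl.out_cont
  | bra => exact .inl (Sub.refl.bra_payload (List.getElem_mem _))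
  | sel => exact .inl (Sub.refl.sel_payload (List.getElem_mem _))

theorem sub_right (h : Step j j') : Sub j.2.1 j'.2.2 ∨ Sub j.2.2 j'.2.2 := by
  cases h with
  | recL => exact .inr .refl
  | recR => exact .inr Sub.refl.mu_unfold
  | inp_payload => exact .inr (Sub.refl.inp_payload (List.getElem_mem _))
  | inp_cont => exact .inr Sub.refl.inp_cont
  | out_payload => exact .inl (Sub.refl.out_payload (List.getElem_mem _))
  | out_cont => exact .inr Sub.refl.out_cont
  | bra => exact .inr (Sub.refl.bra_payload (List.getElem_mem _))
  | sel => exact .inr (Sub.refl.sel_payload (List.getElem_mem _))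

theorem exists_sub_of_mem_types (h : Step j j') {t : SType} (ht : t ∈ j'.types) :
    ∃ s ∈ j.types, Sub s t := by
  have of_compared {u : SType} (hu : Sub j.2.1 u ∨ Sub j.2.2 u) : ∃ s ∈ j.types, Sub s u :=
    hu.elim (fun hu => ⟨j.2.1, ⟨j.2, Set.mem_insert _ _, .inl rfl⟩, hu⟩)
      (fun hu => ⟨j.2.2, ⟨j.2, Set.mem_insert _ _, .inr rfl⟩, hu⟩)
  obtain ⟨p, rfl | hp, htp⟩ := ht
  · obtain rfl | rfl := htp
    · exact of_compared h.sub_left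
    · exact of_compared h.sub_right
  · exact ⟨t, ⟨p, h.assumptions_subset hp, htp⟩, .refl⟩

end Step

end SType

theorem reaches_mem_sub_general {j j' : SType.Judgement} (h : SType.Reaches j j') :
    ∀ t ∈ j'.types, ∃ s ∈ j.types, SType.Sub s t := by
  induction h with
  | refl => exact fun t ht => ⟨t, ht, .refl⟩
  | tail _ hstep ih =>
    intro u hu
    obtain ⟨t, ht, htu⟩ := hstep.exists_sub_of_mem_types hu
    obtain ⟨s, hs, hst⟩ := ih t ht
    exact ⟨s, hs, hst.trans htu⟩

/-- If a judgement `Γ ⊢ T' ≤ U'` appears in a derivation tree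
with root `∅ ⊢ T ≤ U` built from the algorithmic subtyping rules, then
`T', U' ∈ Sub(T) ∪ Sub(U)`, and for every assumption `V ≤ W ∈ Γ` also
`V, W ∈ Sub(T) ∪ Sub(U)`. -/
theorem reaches_mem_sub (T U : SType) (Γ : Set (SType × SType)) (T' U' : SType)
    (h : SType.Reaches (∅, T, U) (Γ, T', U')) :
    (SType.Sub T T' ∨ SType.Sub U T') ∧ (SType.Sub T U' ∨ SType.Sub U U') ∧
      ∀ V W, (V, W) ∈ Γ →
        (SType.Sub T V ∨ SType.Sub U V) ∧ (SType.Sub T W ∨ SType.Sub U W) := by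
  have hsub : ∀ S ∈ SType.Judgement.types (Γ, T', U'), SType.Sub T S ∨ SType.Sub U S := by
    simpa [SType.Judgement.types] using reaches_mem_sub_general h
  exact SType.Judgement.forall_mem_types.mp hsub
end

section
/- Let T_k be as in the exponential example. Distinct sequences (α₁, …, α_l) with 0 ≤ α_i < k − i (over all 0 ≤ l < k) yield distinct assumption sets 𝒮_l in the derivation of ∅ ⊢ T_k ≤ T_{k+1}; hence the derivation tree of ∅ ⊢ T_k ≤ T_{k+1} built from the algorithmic subtyping rules contains at least (k−1)! distinct judgements. -/
/-!
For each `1 ≤ i ≤ l` the algorithm may pass through a payload on its way from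
`S_{k-i+1}^k ≤ S_{k+1}^{k+1}` to `S_{k-i}^k ≤ S_{k+1}^{k+1}`. Both sides are chains of inputs, so
after any number of continuation steps the payloads are `Y_a` and `Y_{a+i}` for some `a`, and every
`a < k - i` may be chosen as `α_i`. The bodies `W_a^k` and `W_{a+i}^{k+1}` are chains of `a` and
`a + i` inputs ending in `T_k` and `T_{k+1}`. Stripping `a` inputs leaves `T_k ≤ W_i^{k+1}`;
unfolding `T_k` to `S_k^k` and stripping `i` more leaves `S_{k-i}^k ≤ T_{k+1}`.

The integer `code` detects that no pair met on this path has been assumed before, so AS-Assump never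
interferes. It also singles out, among the assumptions, the pairs with a binder `Y_a` on the left.
These record every `α_i` together with `i`, so distinct sequences give distinct assumption sets.
For length `k - 1` there are `(k - 1)(k - 2)⋯1` sequences.
-/

namespace SType

theorem mem_foldr_union {β : Type*} {x : β} {l : List (Set β)} :
    x ∈ l.foldr (· ∪ ·) ∅ ↔ ∃ s ∈ l, x ∈ s := by
  induction l <;> simp_all

theorem map_attach_eq_self {β : Type*} {l : List β} {f : β → β} (h : ∀ b ∈ l, f b = b) :
    l.attach.map (fun b ↦ f b.1) = l := by
  rw [List.attach_map_val, List.map_congr_left h, List.map_id']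

theorem subst_of_notMem_fv (q : SType) (x : ℕ) (t : SType) (hx : x ∉ t.fv) :
    subst q x t = t := by
  fun_induction subst q x t with
  | case1 | case3 | case4 => rfl
  | case2 => simp [fv] at hx
  | case5 y t hy ih => rw [ih fun hxt ↦ hx (by simp [fv, hxt, Ne.symm hy])]
  | case6 ts u ihts ihu | case7 ts u ihts ihu =>
    simp only [fv, Set.mem_union, mem_foldr_union, not_or] at hx
    rw [ihu hx.2, map_attach_eq_self fun t ht ↦ ihts ⟨t, ht⟩ fun hxt ↦
      hx.1 ⟨t.fv, by simpa using ⟨t, ht, rfl⟩, hxt⟩]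
  | case8 ts ihts | case9 ts ihts =>
    simp only [fv, mem_foldr_union] at hx
    rw [map_attach_eq_self fun t ht ↦ ihts ⟨t, ht⟩ fun hxt ↦
      hx ⟨t.fv, by simpa using ⟨t, ht, rfl⟩, hxt⟩]

theorem fv_V (r : ℕ) : (V r).fv = {0} := by
  induction r with
  | zero => simp [V, fv]
  | succ r ih => simp [V, fv, muZ, ih]

theorem fv_chain (r : ℕ) : (chain r).fv = {0} := by
  induction r with
  | zero => simp [chain, fv]
  | succ r ih => simp [chain, fv, fv_V, ih]

theorem fv_Tk (k : ℕ) : (Tk k).fv = ∅ := by simp [Tk, fv, fv_chain]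

theorem W_zero (k : ℕ) : W k 0 = Tk k := by simp [W, V, subst]

theorem W_succ (k r : ℕ) : W k (r + 1) = .inp [muZ] (W k r) := by simp [W, V, subst, muZ]

theorem fv_W (k r : ℕ) : (W k r).fv = ∅ := by
  induction r with
  | zero => rw [W_zero, fv_Tk]
  | succ r ih => simp [W_succ, fv, muZ, ih]

theorem subst_W (q : SType) (x k r : ℕ) : subst q x (W k r) = W k r :=
  subst_of_notMem_fv q x _ (by simp [fv_W])

theorem subst_chain (k r : ℕ) : subst (Tk k) 0 (chain r) = Sexp k r := by
  induction r with
  | zero => simp [chain, subst, Sexp]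
  | succ r ih => simp [chain, subst, Sexp, ih, W]

/-- An integer telling apart the types met in the derivation of `T_k ≤ T_{k+1}`: the number of
leading inputs of `W_r^k` and `S_r^k` (so `0` on `T_k`), and `-x` on a type `μx.T`, which makes it
negative exactly on the binders `Y_a`. -/
def code : SType → ℤ
  | .mu x _ => -x
  | .inp _ u => code u + 1
  | _ => 0

@[simp] theorem code_mu (x : ℕ) (t : SType) : code (.mu x t) = -x := rfl

theorem code_mu_nonpos (x : ℕ) (t : SType) : code (.mu x t) ≤ 0 := by simp

@[simp] theorem code_Tk (k : ℕ) : code (Tk k) = 0 := rfl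

theorem ne_mu_of_code_pos {t : SType} (ht : 0 < code t) (x : ℕ) (s : SType) : t ≠ .mu x s := by
  rintro rfl
  exact (code_mu_nonpos x s).not_gt ht

/-- A sequence of types, each adding one single-payload input in front of the previous one.
The types `W_r^k` and `S_r^k` both have this shape in the index `r`. -/
def IsInputChain (f : ℕ → SType) : Prop := ∀ r, ∃ t, f (r + 1) = .inp [t] (f r)

theorem isInputChain_W (k : ℕ) : IsInputChain (W k) := fun r ↦ ⟨muZ, W_succ k r⟩

theorem isInputChain_Sexp (k : ℕ) : IsInputChain (Sexp k) := fun r ↦ ⟨.mu (r + 2) (W k r), rfl⟩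

theorem IsInputChain.code_eq {f : ℕ → SType} (hf : IsInputChain f) (r : ℕ) :
    code (f r) = code (f 0) + r := by
  induction r with
  | zero => simp
  | succ r ih =>
    obtain ⟨t, ht⟩ := hf r
    simp only [ht, code, ih]
    push_cast
    ring

@[simp] theorem code_W (k r : ℕ) : code (W k r) = r := by
  simp [(isInputChain_W k).code_eq r, W_zero]

@[simp] theorem code_Sexp (k r : ℕ) : code (Sexp k r) = r := by
  simp [(isInputChain_Sexp k).code_eq r, Sexp]

theorem notMem_insert_of_code_ne {C : Set (SType × SType)} {p q : SType × SType} (hp : p ∉ C)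
    (hpq : code p.1 ≠ code q.1 ∨ code p.2 ≠ code q.2) : p ∉ insert q C := by
  rintro (rfl | hmem)
  · simp at hpq
  · exact hp hmem

/-- No assumed pair relates two types of positive code. Along a pair of input chains AS-In is then
never preempted by AS-Assump. -/
def NoInputPair (C : Set (SType × SType)) : Prop := ∀ p ∈ C, code p.1 ≤ 0 ∨ code p.2 ≤ 0

theorem NoInputPair.insert_of_code_nonpos {C : Set (SType × SType)} {p : SType × SType}
    (hC : NoInputPair C) (hp : code p.1 ≤ 0 ∨ code p.2 ≤ 0) : NoInputPair (insert p C) :=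
  Set.forall_mem_insert.2 ⟨hp, hC⟩

theorem NoInputPair.notMem {C : Set (SType × SType)} {t u : SType} (hC : NoInputPair C)
    (ht : 0 < code t) (hu : 0 < code u) : (t, u) ∉ C := fun hmem ↦ by
  rcases hC _ hmem with h | h
  exacts [h.not_gt ht, h.not_gt hu]

section Derivations

variable {C : Set (SType × SType)} {t u : SType}

theorem IsInputChain.reachesAlg {f g : ℕ → SType} (hf : IsInputChain f) (hg : IsInputChain g)
    (hf₀ : 0 ≤ code (f 0)) (hg₀ : 0 ≤ code (g 0)) (hC : NoInputPair C) (m n d : ℕ) :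
    ReachesAlg (C, f (m + d), g (n + d)) (C, f m, g n) := by
  induction d with
  | zero => exact .refl
  | succ d ih =>
    have hfresh : (f (m + d + 1), g (n + d + 1)) ∉ C :=
      hC.notMem (by rw [hf.code_eq]; omega) (by rw [hg.code_eq]; omega)
    obtain ⟨t, ht⟩ := hf (m + d)
    obtain ⟨u, hu⟩ := hg (n + d)
    rw [ht, hu] at hfresh
    rw [← Nat.add_assoc, ← Nat.add_assoc, ht, hu]
    exact .head (.inp_cont hfresh rfl) ih

theorem stepAlg_recL {x : ℕ} {s s' : SType} (hs : subst (.mu x s) x s = s')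
    (h : (.mu x s, u) ∉ C) : StepAlg (C, .mu x s, u) (insert (.mu x s, u) C, s', u) :=
  hs ▸ .recL h

theorem stepAlg_recR {x : ℕ} {s s' : SType} (hs : subst (.mu x s) x s = s')
    (h : (t, .mu x s) ∉ C) (ht : 0 < code t) :
    StepAlg (C, t, .mu x s) (insert (t, .mu x s) C, t, s') :=
  hs ▸ .recR h (ne_mu_of_code_pos ht)

/-- The pair `μY_a.W_a^k ≤ μY_{a+i}.W_{a+i}^{k+1}`. -/
def binderPair (k i a : ℕ) : SType × SType :=
  (.mu (a + 2) (W k a), .mu (a + i + 2) (W (k + 1) (a + i)))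

/-- The pair `W_a^k ≤ μY_{a+i}.W_{a+i}^{k+1}`. -/
def bodyPair (k i a : ℕ) : SType × SType := (W k a, .mu (a + i + 2) (W (k + 1) (a + i)))

/-- The pair assumed when the left-hand side of round `i` unfolds `T_k` to `S_k^k`. For `a ≠ 0` it
is `T_k ≤ W_i^{k+1}`, as in `𝒮_l`. For `a = 0` the type `W_0^k` is already `T_k`, so AS-RecL
unfolds it before the right-hand side is touched, and AS-RecR then assumes
`S_k^k ≤ μY_i.W_i^{k+1}`. -/
def loopPair (k i a : ℕ) : SType × SType :=
  if a = 0 then (Sexp k k, .mu (i + 2) (W (k + 1) i)) else (Tk k, W (k + 1) i)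

/-- The pair `S_{k-i}^k ≤ T_{k+1}`. -/
def returnPair (k i : ℕ) : SType × SType := (Sexp k (k - i), Tk (k + 1))

/-- The pairs assumed in round `i`, which leads from `S_{k-i+1}^k ≤ S_{k+1}^{k+1}` through the
payloads `Y_a` and `Y_{a+i}` to `S_{k-i}^k ≤ S_{k+1}^{k+1}`. -/
def round (k i a : ℕ) : Set (SType × SType) :=
  {returnPair k i, loopPair k i a, bodyPair k i a, binderPair k i a}

/-- The assumption set with which the algorithm reaches `S_{k-l}^k ≤ S_{k+1}^{k+1}` along
`α₁, …, α_l`. It is `𝒮_l` with `T_k ≤ W_i^{k+1}` replaced by `loopPair k i 0` when `α_i = 0`. -/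
def trace (k : ℕ) (α : ℕ → ℕ) : ℕ → Set (SType × SType)
  | 0 => {(Sexp k k, Tk (k + 1)), (Tk k, Tk (k + 1))}
  | l + 1 => round k (l + 1) (α (l + 1)) ∪ trace k α l

theorem mem_trace {k l : ℕ} {α : ℕ → ℕ} {p : SType × SType} :
    p ∈ trace k α l ↔ p = (Sexp k k, Tk (k + 1)) ∨ p = (Tk k, Tk (k + 1)) ∨
      ∃ i ∈ Set.Icc 1 l, p ∈ round k i (α i) := by
  induction l with
  | zero => simp [trace]
  | succ l ih =>
    rw [trace, Set.mem_union, ih, ← Set.insert_Icc_right_eq_Icc_add_one (by omega : 1 ≤ l + 1)]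
    simp only [Set.mem_insert_iff, exists_eq_or_imp]
    tauto

theorem code_loopPair (k i a : ℕ) :
    (code (loopPair k i a).1 = k ∧ code (loopPair k i a).2 = -(i + 2)) ∨
      (code (loopPair k i a).1 = 0 ∧ code (loopPair k i a).2 = i) := by
  unfold loopPair
  split_ifs <;> simp

theorem code_of_mem_round {k i a : ℕ} {p : SType × SType} (hp : p ∈ round k i a) :
    (code p.1 = ↑(k - i) ∧ code p.2 = 0) ∨
      (code p.1 = k ∧ code p.2 = -(i + 2)) ∨ (code p.1 = 0 ∧ code p.2 = i) ∨
      (code p.1 = a ∧ code p.2 = -(a + i + 2)) ∨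
      (code p.1 = -(a + 2) ∧ code p.2 = -(a + i + 2)) := by
  rcases hp with rfl | rfl | rfl | rfl
  · simp [returnPair]
  · have hcode := code_loopPair k i a
    omega
  · simp [bodyPair]
  · simp [binderPair]

theorem disjoint_round_trace {k l a : ℕ} {α : ℕ → ℕ} (hα : ∀ i, 1 ≤ i → i ≤ l → α i < k - i)
    (ha : a + (l + 1) < k) : Disjoint (round k (l + 1) a) (trace k α l) := by
  rw [Set.disjoint_left]
  intro p hp hpt
  have hcode := code_of_mem_round hp
  rcases mem_trace.1 hpt with rfl | rfl | ⟨i, ⟨hi₁, hil⟩, hpi⟩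
  · simp only [code_Sexp, code_Tk] at hcode
    omega
  · simp only [code_Tk] at hcode
    omega
  · have hαi := hα i hi₁ hil
    have hcodei := code_of_mem_round hpi
    omega

theorem noInputPair_round_union {k i a : ℕ} (hC : NoInputPair C) :
    NoInputPair (round k i a ∪ C) := by
  rintro p (hp | hp)
  · have hcode := code_of_mem_round hp
    omega
  · exact hC p hp

theorem noInputPair_trace (k : ℕ) (α : ℕ → ℕ) (l : ℕ) : NoInputPair (trace k α l) := by
  induction l with
  | zero => simp [NoInputPair, trace]
  | succ l ih => exact noInputPair_round_union ih

theorem reachesAlg_payload (hC : NoInputPair C) (k k' a b d : ℕ) :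
    ReachesAlg (C, Sexp k (a + 1 + d), Sexp k' (b + 1 + d))
      (C, .mu (a + 2) (W k a), .mu (b + 2) (W k' b)) := by
  have hstrip := (isInputChain_Sexp k).reachesAlg (isInputChain_Sexp k') (by simp) (by simp) hC
    (a + 1) (b + 1) d
  have hfresh : (Sexp k (a + 1), Sexp k' (b + 1)) ∉ C :=
    hC.notMem (by rw [code_Sexp]; omega) (by rw [code_Sexp]; omega)
  exact hstrip.tail (.inp_payload 0 hfresh rfl Nat.one_pos Nat.one_pos)

theorem NoInputPair.insert_bodyPair (hC : NoInputPair C) (k i a : ℕ) :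
    NoInputPair (insert (bodyPair k i a) C) :=
  hC.insert_of_code_nonpos (.inr (code_mu_nonpos ..))

theorem reachesAlg_loopPair (hC : NoInputPair C) {k i a : ℕ} (hk : 0 < k)
    (hbody : bodyPair k i a ∉ C) (hloop : loopPair k i a ∉ C) :
    ReachesAlg (C, bodyPair k i a)
      (insert (loopPair k i a) (insert (bodyPair k i a) C), Sexp k k, W (k + 1) i) := by
  have hinsert := notMem_insert_of_code_ne (q := bodyPair k i a) hloop
  rcases Nat.eq_zero_or_pos a with rfl | ha
  · simp only [bodyPair, loopPair, if_true, W_zero, Nat.zero_add] at *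
    refine .head (stepAlg_recL (subst_chain k k) hbody) (.single ?_)
    exact stepAlg_recR (subst_W ..) (hinsert (.inl (by simpa using hk.ne'))) (by simpa)
  · have hstrip := (isInputChain_W k).reachesAlg (isInputChain_W (k + 1)) (by simp) (by simp)
      (hC.insert_bodyPair k i a) 0 i a
    simp only [bodyPair, loopPair, if_neg ha.ne', W_zero, Nat.zero_add, Nat.add_comm i a] at *
    refine .head (stepAlg_recR (subst_W ..) hbody (by simpa)) (hstrip.tail ?_)
    exact stepAlg_recL (subst_chain k k) (hinsert (.inl (by simp only [code_Tk, code_W]; omega)))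

theorem reachesAlg_returnPair (hC : NoInputPair C) {k i : ℕ} (hik : i < k)
    (hreturn : returnPair k i ∉ C) :
    ReachesAlg (C, Sexp k k, W (k + 1) i)
      (insert (returnPair k i) C, Sexp k (k - i), Sexp (k + 1) (k + 1)) := by
  have hstrip := (isInputChain_Sexp k).reachesAlg (isInputChain_W (k + 1)) (by simp) (by simp) hC
    (k - i) 0 i
  rw [W_zero, Nat.zero_add, Nat.sub_add_cancel hik.le] at hstrip
  exact hstrip.tail (stepAlg_recR (subst_chain _ _) hreturn (by simpa))

theorem reachesAlg_bodyPair (hC : NoInputPair C) {k i a : ℕ} (hai : a + i ≤ k)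
    (hbinder : binderPair k i a ∉ C) :
    ReachesAlg (C, Sexp k (k - i + 1), Sexp (k + 1) (k + 1))
      (insert (binderPair k i a) C, bodyPair k i a) := by
  have hpayload := reachesAlg_payload hC k (k + 1) a (a + i) (k - i - a)
  rw [show a + 1 + (k - i - a) = k - i + 1 by omega,
    show a + i + 1 + (k - i - a) = k + 1 by omega] at hpayload
  exact hpayload.tail (stepAlg_recL (subst_W ..) hbinder)

theorem reachesAlg_round (hC : NoInputPair C) {k i a : ℕ} (hai : a + i < k)
    (hfresh : Disjoint (round k i a) C) :
    ReachesAlg (C, Sexp k (k - i + 1), Sexp (k + 1) (k + 1))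
      (round k i a ∪ C, Sexp k (k - i), Sexp (k + 1) (k + 1)) := by
  simp only [round, Set.insert_union, Set.singleton_union, Set.disjoint_insert_left,
    Set.disjoint_singleton_left] at hfresh ⊢
  obtain ⟨hreturn, hloop, hbody, hbinder⟩ := hfresh
  have hcode := code_loopPair k i a
  have hC₁ : NoInputPair (insert (binderPair k i a) C) :=
    hC.insert_of_code_nonpos (.inl (code_mu_nonpos ..))
  have hC₃ := (hC₁.insert_bodyPair k i a).insert_of_code_nonpos (p := loopPair k i a) (by omega)
  have hbody₁ : bodyPair k i a ∉ insert (binderPair k i a) C :=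
    notMem_insert_of_code_ne hbody <| .inl <| by
      simp only [bodyPair, binderPair, code_W, code_mu]
      omega
  have hloop₁ : loopPair k i a ∉ insert (binderPair k i a) C :=
    notMem_insert_of_code_ne hloop <| .inl <| by
      simp only [binderPair, code_mu]
      omega
  have hreturn₃ : returnPair k i ∉
      insert (loopPair k i a) (insert (bodyPair k i a) (insert (binderPair k i a) C)) := by
    refine notMem_insert_of_code_ne (notMem_insert_of_code_ne
      (notMem_insert_of_code_ne hreturn (.inr ?_)) (.inr ?_)) ?_ <;>
    · simp only [returnPair, bodyPair, binderPair, code_mu, code_Tk, code_Sexp]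
      omega
  exact (reachesAlg_bodyPair hC hai.le hbinder).trans
    ((reachesAlg_loopPair hC₁ (by omega) hbody₁ hloop₁).trans
      (reachesAlg_returnPair hC₃ (by omega) hreturn₃))

theorem reachesAlg_trace {k l : ℕ} {α : ℕ → ℕ} (hl : l < k)
    (hα : ∀ i, 1 ≤ i → i ≤ l → α i < k - i) :
    ReachesAlg (∅, Tk k, Tk (k + 1))
      (trace k α l, Sexp k (k - l), Sexp (k + 1) (k + 1)) := by
  induction l with
  | zero =>
    rw [trace, ← insert_empty_eq]
    have hunfoldL : StepAlg (∅, Tk k, Tk (k + 1)) (_, Sexp k k, Tk (k + 1)) :=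
      stepAlg_recL (subst_chain k k) (Set.notMem_empty _)
    refine .head hunfoldL (.single (stepAlg_recR (subst_chain _ _) ?_ (by simpa)))
    exact notMem_insert_of_code_ne (Set.notMem_empty _) (.inl (by simpa using hl.ne'))
  | succ l ih =>
    have hα' : ∀ i, 1 ≤ i → i ≤ l → α i < k - i := fun i hi hil ↦ hα i hi (by omega)
    have ha : α (l + 1) + (l + 1) < k := by have := hα (l + 1); omega
    have hround := reachesAlg_round (noInputPair_trace k α l) ha (disjoint_round_trace hα' ha)
    rw [show k - (l + 1) + 1 = k - l by omega] at hround
    exact (ih (by omega) hα').trans hround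

end Derivations

/-- The pairs `μY_{α_i}.W_{α_i}^k ≤ μY_{α_i+i}.W_{α_i+i}^{k+1}` for `1 ≤ i ≤ l`, from which the
sequence `α₁, …, α_l` can be read off. -/
def binderPairs (k l : ℕ) (α : ℕ → ℕ) : Set (SType × SType) :=
  (fun i ↦ binderPair k i (α i)) '' Set.Icc 1 l

theorem code_binderPair_neg (k i a : ℕ) : code (binderPair k i a).1 < 0 := by
  simp only [binderPair, code_mu]
  omega

theorem binderPair_inj {k i j a b : ℕ} :
    binderPair k i a = binderPair k j b ↔ i = j ∧ a = b := by
  refine ⟨fun h ↦ ?_, by rintro ⟨rfl, rfl⟩; rfl⟩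
  simp only [binderPair, Prod.mk.injEq, mu.injEq] at h
  omega

theorem binderPair_mem_binderPairs {k l i a : ℕ} {α : ℕ → ℕ} :
    binderPair k i a ∈ binderPairs k l α ↔ i ∈ Set.Icc 1 l ∧ α i = a := by
  simp only [binderPairs, Set.mem_image, binderPair_inj]
  constructor
  · rintro ⟨j, hj, rfl, rfl⟩
    exact ⟨hj, rfl⟩
  · rintro ⟨hi, rfl⟩
    exact ⟨i, hi, rfl, rfl⟩

theorem eq_of_binderPairs_eq {k l₁ l₂ : ℕ} {α₁ α₂ : ℕ → ℕ}
    (h : binderPairs k l₁ α₁ = binderPairs k l₂ α₂) :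
    l₁ = l₂ ∧ ∀ i, 1 ≤ i → i ≤ l₁ → α₁ i = α₂ i := by
  have hmem (i a : ℕ) : (i ∈ Set.Icc 1 l₁ ∧ α₁ i = a) ↔ (i ∈ Set.Icc 1 l₂ ∧ α₂ i = a) := by
    rw [← binderPair_mem_binderPairs (k := k), h, binderPair_mem_binderPairs]
  simp only [Set.mem_Icc] at hmem
  refine ⟨le_antisymm ?_ ?_, fun i hi hil ↦ ((hmem i _).1 ⟨⟨hi, hil⟩, rfl⟩).2.symm⟩
  · have := hmem l₁ (α₁ l₁)
    omega
  · have := hmem l₂ (α₂ l₂)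
    omega

theorem sep_calS_code_neg (k l : ℕ) (α : ℕ → ℕ) :
    {p ∈ calS k l α | code p.1 < 0} = binderPairs k l α := by
  ext p
  constructor
  · rintro ⟨((((rfl | rfl) | hp) | ⟨i, -, rfl⟩) | ⟨i, -, rfl⟩) | ⟨i, -, rfl⟩, hneg⟩
    case mp.inl.inl.inl.inr => exact hp
    all_goals
      simp only [code_Tk, code_Sexp, code_W] at hneg
      omega
  · rintro ⟨i, hi, rfl⟩
    exact ⟨.inl (.inl (.inl (.inr ⟨i, hi, rfl⟩))), code_binderPair_neg k i (α i)⟩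

theorem sep_trace_code_neg (k l : ℕ) (α : ℕ → ℕ) :
    {p ∈ trace k α l | code p.1 < 0} = binderPairs k l α := by
  ext p
  rw [Set.mem_sep_iff, mem_trace]
  constructor
  · rintro ⟨rfl | rfl | ⟨i, hi, rfl | rfl | rfl | rfl⟩, hneg⟩
    case inr.inr.inr.inr.inr => exact ⟨i, hi, rfl⟩
    case inr.inr.inr.inl =>
      have hcode := code_loopPair k i (α i)
      omega
    all_goals
      simp only [returnPair, bodyPair, code_Tk, code_Sexp, code_W] at hneg
      omega
  · rintro ⟨i, hi, rfl⟩
    exact ⟨.inr (.inr ⟨i, hi, by simp [round]⟩), code_binderPair_neg k i (α i)⟩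

theorem eq_of_trace_eq {k l₁ l₂ : ℕ} {α₁ α₂ : ℕ → ℕ} (h : trace k α₁ l₁ = trace k α₂ l₂) :
    l₁ = l₂ ∧ ∀ i, 1 ≤ i → i ≤ l₁ → α₁ i = α₂ i :=
  eq_of_binderPairs_eq (k := k) (by rw [← sep_trace_code_neg, h, sep_trace_code_neg])

theorem eq_of_calS_eq {k l₁ l₂ : ℕ} {α₁ α₂ : ℕ → ℕ} (h : calS k l₁ α₁ = calS k l₂ α₂) :
    l₁ = l₂ ∧ ∀ i, 1 ≤ i → i ≤ l₁ → α₁ i = α₂ i :=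
  eq_of_binderPairs_eq (k := k) (by rw [← sep_calS_code_neg, h, sep_calS_code_neg])

/-- The sequence `α₁, …, α_l` with `α_{j+1} = f j`, extended by zero. -/
noncomputable def seqOfFin {l : ℕ} (f : Fin l → ℕ) : ℕ → ℕ :=
  Function.extend (fun j : Fin l ↦ (j : ℕ) + 1) f 0

theorem seqOfFin_succ {l : ℕ} (f : Fin l → ℕ) (j : Fin l) : seqOfFin f (j + 1) = f j :=
  Function.Injective.extend_apply (fun _ _ h ↦ Fin.ext (Nat.succ.inj h)) f 0 j

theorem reachesAlg_trace_seqOfFin {k l : ℕ} (hl : l < k) {f : Fin l → ℕ}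
    (hf : ∀ j, f j < k - 1 - j) :
    ReachesAlg (∅, Tk k, Tk (k + 1))
      (trace k (seqOfFin f) l, Sexp k (k - l), Sexp (k + 1) (k + 1)) := by
  refine reachesAlg_trace hl fun i hi hil ↦ ?_
  obtain ⟨j, rfl⟩ := Nat.exists_eq_add_of_le' hi
  have hj := hf ⟨j, hil⟩
  rw [seqOfFin_succ f ⟨j, hil⟩]
  simp only at hj
  omega

theorem trace_seqOfFin_injective (k l : ℕ) :
    Function.Injective fun f : Fin l → ℕ ↦ trace k (seqOfFin f) l := by
  intro f g hfg
  funext j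
  rw [← seqOfFin_succ f, ← seqOfFin_succ g]
  exact (eq_of_trace_eq hfg).2 _ (Nat.succ_pos _) j.isLt

theorem card_piFinset_range_sub (n l : ℕ) :
    (Fintype.piFinset fun j : Fin l ↦ Finset.range (n - j)).card = n.descFactorial l := by
  simp_rw [Fintype.card_piFinset, Finset.card_range]
  rw [Fin.prod_univ_eq_prod_range (n - ·), Nat.descFactorial_eq_prod_range]

theorem descFactorial_le_encard_reachesAlg {k l : ℕ} (hl : l < k) :
    ((k - 1).descFactorial l : ℕ∞) ≤
      {C | ReachesAlg (∅, Tk k, Tk (k + 1)) (C, Sexp k (k - l), Sexp (k + 1) (k + 1))}.encard := by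
  rw [← card_piFinset_range_sub, ← Set.encard_coe_eq_coe_finsetCard]
  refine Set.encard_le_encard_of_injOn (f := fun f ↦ trace k (seqOfFin f) l) (fun f hf ↦ ?_)
    (trace_seqOfFin_injective k l).injOn
  exact reachesAlg_trace_seqOfFin hl (by simpa using hf)

theorem factorial_le_encard_reachesAlg {k : ℕ} (hk : 1 ≤ k) :
    ((k - 1).factorial : ℕ∞) ≤ {j | ReachesAlg (∅, Tk k, Tk (k + 1)) j}.encard := by
  rw [← Nat.descFactorial_self]
  refine (descFactorial_le_encard_reachesAlg (Nat.sub_one_lt_of_le hk le_rfl)).trans ?_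
  exact Set.encard_le_encard_of_injOn (fun _ hC ↦ hC) (Prod.mk_left_injective _).injOn

end SType

theorem calS_injective_and_factorial_lower_bound_general (k : ℕ) (hk : 1 ≤ k) :
    (∀ (l₁ l₂ : ℕ) (α₁ α₂ : ℕ → ℕ), SType.calS k l₁ α₁ = SType.calS k l₂ α₂ →
      l₁ = l₂ ∧ ∀ i, 1 ≤ i → i ≤ l₁ → α₁ i = α₂ i) ∧
    (Nat.factorial (k - 1) : ℕ∞) ≤
      {j : SType.Judgement |
        SType.ReachesAlg (∅, SType.Tk k, SType.Tk (k + 1)) j}.encard :=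
  ⟨fun _ _ _ _ ↦ SType.eq_of_calS_eq, SType.factorial_le_encard_reachesAlg hk⟩

/-- Distinct sequences `(α₁, …, α_l)` with `0 ≤ αᵢ < k − i`
(over all `0 ≤ l < k`) yield distinct assumption sets `𝒮_l`; hence the
derivation tree of `∅ ⊢ T_k ≤ T_{k+1}` built from the algorithmic subtyping
rules contains at least `(k−1)!` distinct judgements. -/
theorem calS_injective_and_factorial_lower_bound (k : ℕ) (hk : 1 ≤ k) :
    (∀ (l₁ l₂ : ℕ) (α₁ α₂ : ℕ → ℕ), l₁ < k → l₂ < k →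
      (∀ i, 1 ≤ i → i ≤ l₁ → α₁ i < k - i) →
      (∀ i, 1 ≤ i → i ≤ l₂ → α₂ i < k - i) →
      SType.calS k l₁ α₁ = SType.calS k l₂ α₂ →
      l₁ = l₂ ∧ ∀ i, 1 ≤ i → i ≤ l₁ → α₁ i = α₂ i) ∧
    (Nat.factorial (k - 1) : ℕ∞) ≤
      {j : SType.Judgement |
        SType.ReachesAlg (∅, SType.Tk k, SType.Tk (k + 1)) j}.encard := by
  obtain ⟨hinj, hcard⟩ := calS_injective_and_factorial_lower_bound_general k hk
  exact ⟨fun l₁ l₂ α₁ α₂ _ _ _ _ heq ↦ hinj l₁ l₂ α₁ α₂ heq, hcard⟩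
end
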